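/- arXiv:2509.10204 — 3 statements merged into one kernel-verified Lean document; each statement's English description precedes it below -/
import Mathlib

section
/- Let G be a group whose subgroup lattice satisfies the ascending chain condition, and let f : G →* G be a surjective group homomorphism. Then f is injective (hence an automorphism); that is, Noetherian groups are Hopfian. -/
theorem noetherian_group_hopfian {G : Type*} [Group G]
    (hG : WellFoundedGT (Subgroup G)) (f : G →* G) (hf : Function.Surjective f) :
    Function.Injective f := by
  have hmono : Monotone (Subgroup.comap f) := fun _ _ h => Subgroup.comap_mono h
  have hchain : Monotone fun n => (Subgroup.comap f)^[n] ⊥ :=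
    hmono.monotone_iterate_of_le_map bot_le
  obtain ⟨n, hn⟩ := WellFoundedGT.monotone_chain_condition ⟨_, hchain⟩
  have h := hn (n + 1) (Nat.le_succ n)
  change (Subgroup.comap f)^[n] ⊥ = (Subgroup.comap f)^[n + 1] ⊥ at h
  rw [Function.iterate_succ_apply] at h
  have h0 := (Subgroup.comap_injective hf).iterate n h
  rw [← MonoidHom.ker_eq_bot_iff, ← MonoidHom.comap_bot]
  exact h0.symm
end

section
/- Let G be a group and let N be a normal subgroup of G. If the subgroup lattice of N satisfies the descending chain condition and the subgroup lattice of the quotient group G/N satisfies the descending chain condition, then the subgroup lattice of G satisfies the descending chain condition. (Artinian groups are closed under extensions.) -/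
theorem artinian_group_extension (G : Type*) [Group G] (N : Subgroup G) [N.Normal]
    (hN : WellFoundedLT (Subgroup N)) (hQ : WellFoundedLT (Subgroup (G ⧸ N))) :
    WellFoundedLT (Subgroup G) := by
  refine StrictMono.wellFoundedLT
    (f := fun A : Subgroup G => (A.subgroupOf N, A.map (QuotientGroup.mk' N))) ?_
  intro A B hAB
  refine lt_of_le_not_ge
    ⟨Subgroup.comap_mono hAB.le, Subgroup.map_mono hAB.le⟩ ?_
  rintro ⟨h1, h2⟩
  apply hAB.not_ge
  intro b hb
  obtain ⟨a, ha, hab⟩ := h2 (Subgroup.mem_map_of_mem (QuotientGroup.mk' N) hb)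
  have hn : a⁻¹ * b ∈ N := QuotientGroup.eq.mp hab
  have h3 : a⁻¹ * b ∈ A :=
    h1 (x := ⟨a⁻¹ * b, hn⟩) (B.mul_mem (B.inv_mem (hAB.le ha)) hb)
  simpa using A.mul_mem ha h3
end

section
/- Let M, M', N, N' be monoids and let f : M →* N, f' : M' →* N', β : M' →* M, γ : N' →* N be monoid homomorphisms with f ∘ β = γ ∘ f'. Assume: γ is injective; β is injective on the set {x : M' | f' x = 1}; f' is weakly uniform; and β is cancellative. Then β is injective. -/
/-- A monoid homomorphism `f : M →* N` is weakly uniform if whenever `f m₁ = f m₂`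
there exist `m k₁ k₂` with `f k₁ = 1`, `f k₂ = 1`, `m₁ = m * k₁` and `m₂ = m * k₂`. -/
def MonoidHom.WeaklyUniform {M N : Type*} [Monoid M] [Monoid N] (f : M →* N) : Prop :=
  ∀ m₁ m₂ : M, f m₁ = f m₂ →
    ∃ m k₁ k₂ : M, f k₁ = 1 ∧ f k₂ = 1 ∧ m₁ = m * k₁ ∧ m₂ = m * k₂

/-- A monoid homomorphism `β` is cancellative if `β m * β m₁ = β m * β m₂`
implies `β m₁ = β m₂`. -/
def MonoidHom.Cancellative {M' M : Type*} [Monoid M'] [Monoid M] (β : M' →* M) : Prop :=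
  ∀ m m₁ m₂ : M', β m * β m₁ = β m * β m₂ → β m₁ = β m₂

theorem injective_of_square {M M' N N' : Type*}
    [Monoid M] [Monoid M'] [Monoid N] [Monoid N']
    (f : M →* N) (f' : M' →* N') (β : M' →* M) (γ : N' →* N)
    (hcomm : f.comp β = γ.comp f')
    (hγ : Function.Injective γ)
    (hβker : Set.InjOn β {x : M' | f' x = 1})
    (hf' : f'.WeaklyUniform)
    (hβ : β.Cancellative) :
    Function.Injective β := by
  intro x y hxy
  have hx := DFunLike.congr_fun hcomm x
  have hy := DFunLike.congr_fun hcomm y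
  simp only [MonoidHom.comp_apply] at hx hy
  have h : f' x = f' y := hγ (by rw [← hx, ← hy, hxy])
  obtain ⟨m, k₁, k₂, h₁, h₂, rfl, rfl⟩ := hf' x y h
  rw [map_mul, map_mul] at hxy
  rw [hβker h₁ h₂ (hβ m k₁ k₂ hxy)]
end
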